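/- Let (S,d) be a complete separable metric space and, for ρ > 0, let M = {μ ∈ M(S) : ‖μ‖_TV = ρ} be the total variation sphere of radius ρ. Then the restriction to M of the σ(M(S), BL(S))-weak topology coincides with the restriction to M of the topology induced by the norm ‖·‖*_BL. -/

import Mathlib

open MeasureTheory Filter Topology

/-- A function is bounded Lipschitz. -/
def IsBL {S : Type*} [PseudoMetricSpace S] (f : S → ℝ) : Prop :=
  (∃ C : ℝ, ∀ x, |f x| ≤ C) ∧ ∃ K : NNReal, LipschitzWith K f

/-- Pairing of a finite signed Borel measure with a function, via the Jordan decomposition. -/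
noncomputable def pairing {S : Type*} [MeasurableSpace S] (μ : SignedMeasure S) (f : S → ℝ) : ℝ :=
  (∫ x, f x ∂μ.toJordanDecomposition.posPart) - ∫ x, f x ∂μ.toJordanDecomposition.negPart

/-- Total variation norm of a finite signed measure. -/
noncomputable def tvNorm {S : Type*} [MeasurableSpace S] (μ : SignedMeasure S) : ℝ :=
  (μ.totalVariation Set.univ).toReal

/-- Dual bounded Lipschitz norm on signed measures. -/
noncomputable def blDualNorm {S : Type*} [PseudoMetricSpace S] [MeasurableSpace S]
    (μ : SignedMeasure S) : ℝ :=
  sSup {r : ℝ | ∃ (f : S → ℝ) (C : ℝ) (K : NNReal), (∀ x, |f x| ≤ C) ∧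
    LipschitzWith K f ∧ C + (K : ℝ) ≤ 1 ∧ r = |pairing μ f|}

/-- The `σ(M(S), BL(S))`-weak topology on `M(S)`: the coarsest topology making
`μ ↦ ⟨μ, f⟩` continuous for every bounded Lipschitz `f`. -/
noncomputable def weakTop (S : Type*) [PseudoMetricSpace S] [MeasurableSpace S] :
    TopologicalSpace (SignedMeasure S) :=
  ⨅ f : {g : S → ℝ // IsBL g},
    TopologicalSpace.induced (fun μ : SignedMeasure S => pairing μ f.1) inferInstance

/-- The topology on `M(S)` induced by the norm `‖·‖*_BL`, generated by the open balls. -/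
noncomputable def normTop (S : Type*) [PseudoMetricSpace S] [MeasurableSpace S] :
    TopologicalSpace (SignedMeasure S) :=
  TopologicalSpace.generateFrom
    {B | ∃ (μ : SignedMeasure S) (ε : ℝ), 0 < ε ∧ B = {ν | blDualNorm (ν - μ) < ε}}

/-!
Convergence `νᵢ → μ` against bounded Lipschitz functions together with `limsup ‖νᵢ‖_TV ≤ ‖μ‖_TV`
rules out both cancellation and escape of mass in the limit. Indeed, `‖μ‖_TV` is almost attained by
a bounded Lipschitz `f` with `|f| ≤ 1` which vanishes outside the `δ`-thickening `U` of a finite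
set. Since `⟨νᵢ, f⟩ ≤ |νᵢ|(U)` for such an `f`, eventually `|νᵢ|(Uᶜ) ≤ ‖νᵢ‖_TV - ⟨νᵢ, f⟩` is small.
The unit ball of `BL(S)` is equi-Lipschitz, so on `U` it is covered up to `3δ` by finitely many of
its elements. Hence convergence on these finitely many functions is uniform on the unit ball.
-/

section Integral

variable {S : Type*} [MeasurableSpace S]

theorem integral_abs_le_of_abs_le_of_abs_le_compl {m : Measure S} [IsFiniteMeasure m] {g : S → ℝ}
    (hg : Integrable g m) {U : Set S} (hU : MeasurableSet U) {a b : ℝ}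
    (ha : ∀ x ∈ U, |g x| ≤ a) (hb : ∀ x ∈ Uᶜ, |g x| ≤ b) :
    ∫ x, |g x| ∂m ≤ a * m.real U + b * m.real Uᶜ := by
  rw [← integral_add_compl hU hg.abs]
  refine add_le_add ((le_abs_self _).trans ?_) ((le_abs_self _).trans ?_)
  · exact norm_setIntegral_le_of_norm_le_const (f := fun x => |g x|) (measure_lt_top m U)
      fun x hx => (abs_abs (g x)).trans_le (ha x hx)
  · exact norm_setIntegral_le_of_norm_le_const (f := fun x => |g x|) (measure_lt_top m Uᶜ)
      fun x hx => (abs_abs (g x)).trans_le (hb x hx)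

theorem integrable_totalVariation_iff {μ : SignedMeasure S} {f : S → ℝ} :
    Integrable f μ.totalVariation ↔ Integrable f μ.toJordanDecomposition.posPart ∧
      Integrable f μ.toJordanDecomposition.negPart :=
  integrable_add_measure

theorem pairing_eq_integral {μ : SignedMeasure S} {f : S → ℝ}
    (hf : Integrable f μ.totalVariation) : pairing μ f = μ.integral f (.flip (.lsmul ℝ ℝ)) := by
  obtain ⟨hpos, hneg⟩ := integrable_totalVariation_iff.1 hf
  conv_rhs => rw [← μ.toSignedMeasure_toJordanDecomposition]
  rw [JordanDecomposition.toSignedMeasure, VectorMeasure.integral_sub_vectorMeasure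
    (by simpa [VectorMeasure.Integrable] using hpos)
    (by simpa [VectorMeasure.Integrable] using hneg), VectorMeasure.integral_toSignedMeasure,
    VectorMeasure.integral_toSignedMeasure, pairing]

theorem pairing_sub_left {μ ν : SignedMeasure S} {f : S → ℝ} (hμ : Integrable f μ.totalVariation)
    (hν : Integrable f ν.totalVariation) : pairing (μ - ν) f = pairing μ f - pairing ν f := by
  have hμ' : μ.Integrable f := by rwa [μ.totalVariation_eq_variation] at hμ
  have hν' : ν.Integrable f := by rwa [ν.totalVariation_eq_variation] at hν
  have hsub : Integrable f (μ - ν).totalVariation := by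
    rw [SignedMeasure.totalVariation_eq_variation]
    exact hμ'.sub_vectorMeasure hν'
  rw [pairing_eq_integral hsub, pairing_eq_integral hμ, pairing_eq_integral hν,
    VectorMeasure.integral_sub_vectorMeasure hμ' hν']

theorem pairing_sub_right {μ : SignedMeasure S} {f g : S → ℝ} (hf : Integrable f μ.totalVariation)
    (hg : Integrable g μ.totalVariation) :
    pairing μ (fun x => f x - g x) = pairing μ f - pairing μ g := by
  obtain ⟨hfpos, hfneg⟩ := integrable_totalVariation_iff.1 hf
  obtain ⟨hgpos, hgneg⟩ := integrable_totalVariation_iff.1 hg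
  rw [pairing, integral_sub hfpos hgpos, integral_sub hfneg hgneg, pairing, pairing]
  ring

theorem pairing_const_mul (μ : SignedMeasure S) (c : ℝ) (f : S → ℝ) :
    pairing μ (fun x => c * f x) = c * pairing μ f := by
  rw [pairing, integral_const_mul, integral_const_mul, pairing, mul_sub]

theorem abs_pairing_le_integral_abs {μ : SignedMeasure S} {f : S → ℝ}
    (hf : Integrable f μ.totalVariation) : |pairing μ f| ≤ ∫ x, |f x| ∂μ.totalVariation := by
  obtain ⟨hpos, hneg⟩ := integrable_totalVariation_iff.1 hf
  rw [SignedMeasure.totalVariation, integral_add_measure hpos.abs hneg.abs]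
  exact (abs_sub _ _).trans (add_le_add abs_integral_le_integral_abs abs_integral_le_integral_abs)

theorem tvNorm_eq_add_compl (μ : SignedMeasure S) {U : Set S} (hU : MeasurableSet U) :
    tvNorm μ = μ.totalVariation.real U + μ.totalVariation.real Uᶜ :=
  (measureReal_add_measureReal_compl hU).symm

theorem abs_pairing_le_tvNorm {μ : SignedMeasure S} {f : S → ℝ}
    (hf : Integrable f μ.totalVariation) (hf1 : ∀ x, |f x| ≤ 1) : |pairing μ f| ≤ tvNorm μ := by
  have hle := integral_abs_le_of_abs_le_of_abs_le_compl hf .univ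
    (fun x _ => hf1 x) (fun x _ => hf1 x)
  rw [← mul_add, one_mul, ← tvNorm_eq_add_compl μ .univ] at hle
  exact (abs_pairing_le_integral_abs hf).trans hle

theorem totalVariation_compl_le_tvNorm_sub_pairing {μ : SignedMeasure S} {f : S → ℝ}
    (hf : Integrable f μ.totalVariation) (hf1 : ∀ x, |f x| ≤ 1) {U : Set S} (hU : MeasurableSet U)
    (hfU : ∀ x ∉ U, f x = 0) : μ.totalVariation.real Uᶜ ≤ tvNorm μ - pairing μ f := by
  have hpair : pairing μ f ≤ 1 * μ.totalVariation.real U + 0 * μ.totalVariation.real Uᶜ :=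
    (le_abs_self _).trans <| (abs_pairing_le_integral_abs hf).trans <|
      integral_abs_le_of_abs_le_of_abs_le_compl hf hU (fun x _ => hf1 x)
        (fun x hx => by simp [hfU x hx])
  linarith [tvNorm_eq_add_compl μ hU]

theorem exists_measurableSet_pairing_eq_tvNorm (μ : SignedMeasure S) :
    ∃ P : Set S, MeasurableSet P ∧ pairing μ (fun x => 2 * P.indicator 1 x - 1) = tvNorm μ := by
  obtain ⟨N, hN, hposN, hnegN⟩ := μ.toJordanDecomposition.mutuallySingular
  refine ⟨Nᶜ, hN.compl, ?_⟩
  have hpos : (fun x => 2 * Nᶜ.indicator (1 : S → ℝ) x - 1)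
      =ᵐ[μ.toJordanDecomposition.posPart] fun _ => 1 := by
    filter_upwards [measure_eq_zero_iff_ae_notMem.1 hposN] with x hx
    norm_num [hx]
  have hneg : (fun x => 2 * Nᶜ.indicator (1 : S → ℝ) x - 1)
      =ᵐ[μ.toJordanDecomposition.negPart] fun _ => -1 := by
    filter_upwards [measure_eq_zero_iff_ae_notMem.1 hnegN] with x hx
    simp [hx]
  rw [pairing, integral_congr_ae hpos, integral_congr_ae hneg, tvNorm, ← Measure.real,
    SignedMeasure.totalVariation, measureReal_add_apply]
  simp

end Integral

section BoundedLipschitz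

variable {S : Type*} [PseudoMetricSpace S] {f g : S → ℝ}

theorem isBL_const (c : ℝ) : IsBL fun _ : S => c :=
  ⟨⟨|c|, fun _ => le_rfl⟩, 0, LipschitzWith.const c⟩

theorem IsBL.sub (hf : IsBL f) (hg : IsBL g) : IsBL fun x => f x - g x := by
  obtain ⟨⟨C, hC⟩, K, hK⟩ := hf
  obtain ⟨⟨D, hD⟩, L, hL⟩ := hg
  exact ⟨⟨C + D, fun x => (abs_sub _ _).trans (add_le_add (hC x) (hD x))⟩, K + L, hK.sub hL⟩

theorem IsBL.mul (hf : IsBL f) (hg : IsBL g) : IsBL fun x => f x * g x := by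
  obtain ⟨⟨C, hC⟩, K, hK⟩ := hf
  obtain ⟨⟨D, hD⟩, L, hL⟩ := hg
  refine ⟨⟨|C| * |D|, fun x => ?_⟩, C.nnabs * L + D.nnabs * K,
    LipschitzWith.of_dist_le_mul fun x y => ?_⟩
  · rw [abs_mul]
    gcongr ?_ * ?_
    exacts [(hC x).trans (le_abs_self C), (hD x).trans (le_abs_self D)]
  calc |f x * g x - f y * g y|
      = |f x * (g x - g y) + g y * (f x - f y)| := by ring_nf
    _ ≤ |f x| * |g x - g y| + |g y| * |f x - f y| := by
        simpa only [abs_mul] using abs_add_le (f x * (g x - g y)) (g y * (f x - f y))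
    _ ≤ |C| * (L * dist x y) + |D| * (K * dist x y) := by
        gcongr ?_ * ?_ + ?_ * ?_
        exacts [(hC x).trans (le_abs_self C), hL.dist_le_mul x y,
          (hD y).trans (le_abs_self D), hK.dist_le_mul x y]
    _ = (C.nnabs * L + D.nnabs * K : NNReal) * dist x y := by push_cast; ring

theorem IsBL.integrable [MeasurableSpace S] [OpensMeasurableSpace S] (hf : IsBL f) (m : Measure S)
    [IsFiniteMeasure m] : Integrable f m := by
  obtain ⟨⟨C, hC⟩, K, hK⟩ := hf
  exact .of_bound hK.continuous.measurable.aestronglyMeasurable C (.of_forall hC)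

theorem abs_thickenedIndicator_le_one {r : ℝ} (hr : 0 < r) (E : Set S) (x : S) :
    |(thickenedIndicator hr E x : ℝ)| ≤ 1 := by
  rw [NNReal.abs_eq]
  exact_mod_cast thickenedIndicator_le_one hr E x

theorem isBL_thickenedIndicator {r : ℝ} (hr : 0 < r) (E : Set S) :
    IsBL fun x => (thickenedIndicator hr E x : ℝ) :=
  ⟨⟨1, abs_thickenedIndicator_le_one hr E⟩, _, lipschitzWith_thickenedIndicator hr E⟩

/-- The closed unit ball of `BL(S)` for `‖f‖_BL = ‖f‖_∞ + |f|_L`. Rather than the two optimal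
constants, membership asks for some bound `C` and some Lipschitz constant `K` with `C + K ≤ 1`,
which is how the test functions in `blDualNorm` are described. -/
def blUnitBall (S : Type*) [PseudoMetricSpace S] : Set (S → ℝ) :=
  {f | ∃ (C : ℝ) (K : NNReal), (∀ x, |f x| ≤ C) ∧ LipschitzWith K f ∧ C + (K : ℝ) ≤ 1}

theorem isBL_of_mem_blUnitBall (hf : f ∈ blUnitBall S) : IsBL f := by
  obtain ⟨C, K, hC, hK, -⟩ := hf
  exact ⟨⟨C, hC⟩, K, hK⟩

theorem abs_le_one_of_mem_blUnitBall (hf : f ∈ blUnitBall S) (x : S) : |f x| ≤ 1 := by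
  obtain ⟨C, K, hC, -, hCK⟩ := hf
  linarith [hC x, K.coe_nonneg]

theorem lipschitzWith_one_of_mem_blUnitBall (hf : f ∈ blUnitBall S) : LipschitzWith 1 f := by
  obtain ⟨C, K, hC, hK, hCK⟩ := hf
  refine LipschitzWith.of_dist_le_mul fun x y => (hK.dist_le_mul x y).trans ?_
  have hK1 : (K : ℝ) ≤ 1 := by linarith [(abs_nonneg _).trans (hC x)]
  gcongr
  exact hK1

theorem zero_mem_blUnitBall : (fun _ => 0) ∈ blUnitBall S :=
  ⟨0, 0, by simp, LipschitzWith.const 0, by simp⟩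

theorem IsBL.exists_inv_mul_mem_blUnitBall (hf : IsBL f) :
    ∃ c : ℝ, 0 < c ∧ (fun x => c⁻¹ * f x) ∈ blUnitBall S := by
  obtain ⟨⟨C, hC⟩, K, hK⟩ := hf
  have hc : 0 < |C| + K + 1 := by positivity
  refine ⟨|C| + K + 1, hc, (|C| + K + 1)⁻¹ * |C|, ‖(|C| + K + 1)⁻¹‖₊ * K, fun x => ?_,
    (lipschitzWith_smul _).comp hK, ?_⟩
  · rw [abs_mul, abs_of_pos (inv_pos.2 hc)]
    gcongr _ * ?_
    exact (hC x).trans (le_abs_self C)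
  · rw [NNReal.coe_mul, coe_nnnorm, Real.norm_of_nonneg (inv_pos.2 hc).le, ← mul_add,
      inv_mul_le_iff₀ hc]
    linarith

theorem exists_finite_net_blUnitBall {F : Set S} (hF : F.Finite) {δ : ℝ} (hδ : 0 < δ) :
    ∃ T ⊆ blUnitBall S, T.Finite ∧
      ∀ g ∈ blUnitBall S, ∃ h ∈ T, ∀ y ∈ F, |g y - h y| < δ := by
  have : Fintype F := hF.fintype
  let restr : (S → ℝ) → F → ℝ := F.domRestrict
  have hbdd : TotallyBounded (restr '' blUnitBall S) := by
    refine (isCompact_closedBall (0 : F → ℝ) 1).totallyBounded.subset ?_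
    rintro _ ⟨g, hg, rfl⟩
    rw [mem_closedBall_zero_iff, pi_norm_le_iff_of_nonneg zero_le_one]
    exact fun y => abs_le_one_of_mem_blUnitBall hg y
  obtain ⟨T, hT, hTfin, hcover⟩ := Set.exists_subset_image_finite_and.1
    (Metric.finite_approx_of_totallyBounded hbdd δ hδ)
  refine ⟨T, hT, hTfin, fun g hg => ?_⟩
  obtain ⟨_, ⟨h, hhT, rfl⟩, hgh⟩ := Set.mem_iUnion₂.1 (hcover ⟨g, hg, rfl⟩)
  exact ⟨h, hhT, fun y hy => (dist_pi_lt_iff hδ).1 (Metric.mem_ball.1 hgh) ⟨y, hy⟩⟩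

theorem exists_finite_net_blUnitBall_thickening {F : Set S} (hF : F.Finite) {δ : ℝ} (hδ : 0 < δ) :
    ∃ T ⊆ blUnitBall S, T.Finite ∧
      ∀ g ∈ blUnitBall S, ∃ h ∈ T, ∀ x ∈ Metric.thickening δ F, |g x - h x| ≤ 3 * δ := by
  obtain ⟨T, hT, hTfin, hnet⟩ := exists_finite_net_blUnitBall hF hδ
  refine ⟨T, hT, hTfin, fun g hg => ?_⟩
  obtain ⟨h, hhT, hgh⟩ := hnet g hg
  refine ⟨h, hhT, fun x hx => ?_⟩
  obtain ⟨y, hyF, hxy⟩ := Metric.mem_thickening_iff.1 hx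
  have hg_lip := (lipschitzWith_one_of_mem_blUnitBall hg).dist_le_mul x y
  have hh_lip := (lipschitzWith_one_of_mem_blUnitBall (hT hhT)).dist_le_mul y x
  rw [NNReal.coe_one, one_mul] at hg_lip hh_lip
  calc |g x - h x| ≤ dist (g x) (g y) + dist (g y) (h y) + dist (h y) (h x) :=
        dist_triangle4 (g x) (g y) (h y) (h x)
    _ ≤ δ + δ + δ := by
        gcongr
        exacts [hg_lip.trans hxy.le, (hgh y hyF).le, hh_lip.trans (dist_comm y x ▸ hxy.le)]
    _ = 3 * δ := by ring

end BoundedLipschitz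

section DualNorm

variable {S : Type*} [PseudoMetricSpace S] [MeasurableSpace S]

theorem blDualNorm_le {μ : SignedMeasure S} {c : ℝ} (h : ∀ f ∈ blUnitBall S, |pairing μ f| ≤ c) :
    blDualNorm μ ≤ c := by
  obtain ⟨C, K, hC, hK, hCK⟩ := zero_mem_blUnitBall (S := S)
  refine csSup_le ⟨_, _, C, K, hC, hK, hCK, rfl⟩ ?_
  rintro _ ⟨f, C, K, hC, hK, hCK, rfl⟩
  exact h f ⟨C, K, hC, hK, hCK⟩

variable [OpensMeasurableSpace S]

theorem abs_pairing_le_blDualNorm (μ : SignedMeasure S) {f : S → ℝ} (hf : f ∈ blUnitBall S) :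
    |pairing μ f| ≤ blDualNorm μ := by
  obtain ⟨C, K, hC, hK, hCK⟩ := hf
  refine le_csSup ⟨tvNorm μ, ?_⟩ ⟨f, C, K, hC, hK, hCK, rfl⟩
  rintro _ ⟨g, C, K, hC, hK, hCK, rfl⟩
  have hg : g ∈ blUnitBall S := ⟨C, K, hC, hK, hCK⟩
  exact abs_pairing_le_tvNorm ((isBL_of_mem_blUnitBall hg).integrable _)
    (abs_le_one_of_mem_blUnitBall hg)

theorem blDualNorm_nonneg (μ : SignedMeasure S) : 0 ≤ blDualNorm μ :=
  (abs_nonneg _).trans (abs_pairing_le_blDualNorm μ zero_mem_blUnitBall)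

theorem IsBL.pairing_sub {f : S → ℝ} (hf : IsBL f) (μ ν : SignedMeasure S) :
    pairing (μ - ν) f = pairing μ f - pairing ν f :=
  pairing_sub_left (hf.integrable _) (hf.integrable _)

theorem blDualNorm_sub_self (μ : SignedMeasure S) : blDualNorm (μ - μ) = 0 := by
  refine le_antisymm (blDualNorm_le fun f hf => ?_) (blDualNorm_nonneg _)
  rw [(isBL_of_mem_blUnitBall hf).pairing_sub, sub_self, abs_zero]

theorem blDualNorm_sub_le (μ ν ξ : SignedMeasure S) :
    blDualNorm (μ - ξ) ≤ blDualNorm (μ - ν) + blDualNorm (ν - ξ) := by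
  refine blDualNorm_le fun f hf => ?_
  have hμν := abs_pairing_le_blDualNorm (μ - ν) hf
  have hνξ := abs_pairing_le_blDualNorm (ν - ξ) hf
  rw [(isBL_of_mem_blUnitBall hf).pairing_sub] at hμν hνξ ⊢
  exact (abs_sub_le _ _ _).trans (add_le_add hμν hνξ)

theorem IsBL.exists_abs_pairing_le_mul_blDualNorm {f : S → ℝ} (hf : IsBL f) :
    ∃ c, ∀ μ, |pairing μ f| ≤ c * blDualNorm μ := by
  obtain ⟨c, hc, hcf⟩ := hf.exists_inv_mul_mem_blUnitBall
  refine ⟨c, fun μ => ?_⟩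
  have hle := abs_pairing_le_blDualNorm μ hcf
  rwa [pairing_const_mul, abs_mul, abs_of_pos (inv_pos.2 hc), inv_mul_le_iff₀ hc] at hle

end DualNorm

section Topologies

variable {S ι : Type*} [PseudoMetricSpace S] [MeasurableSpace S] {l : Filter ι}
  {ν : ι → SignedMeasure S} {μ : SignedMeasure S}

theorem tendsto_nhds_weakTop_iff :
    Tendsto ν l (@nhds _ (weakTop S) μ) ↔
      ∀ f, IsBL f → Tendsto (fun i => pairing (ν i) f) l (𝓝 (pairing μ f)) := by
  rw [weakTop, nhds_iInf, tendsto_iInf]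
  simp only [nhds_induced, tendsto_comap_iff, Subtype.forall, Function.comp_def]

theorem tendsto_nhds_normTop_iff [OpensMeasurableSpace S] :
    Tendsto ν l (@nhds _ (normTop S) μ) ↔ Tendsto (fun i => blDualNorm (ν i - μ)) l (𝓝 0) := by
  rw [normTop, TopologicalSpace.tendsto_nhds_generateFrom_iff]
  refine ⟨fun h => ?_, ?_⟩
  · refine tendsto_order.2 ⟨fun a ha => .of_forall fun i => ha.trans_le (blDualNorm_nonneg _),
      fun ε hε => h _ ⟨μ, ε, hε, rfl⟩ ?_⟩
    simpa only [Set.mem_ofPred_eq, blDualNorm_sub_self] using hε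
  · rintro h _ ⟨ξ, ε, -, rfl⟩ (hμ : blDualNorm (μ - ξ) < ε)
    filter_upwards [h.eventually_lt_const (sub_pos.2 hμ)] with i hi
    exact (blDualNorm_sub_le (ν i) μ ξ).trans_lt (lt_sub_iff_add_lt.1 hi)

theorem normTop_le_weakTop [OpensMeasurableSpace S] : normTop S ≤ weakTop S := by
  refine (le_iff_nhds _ _).2 fun μ => tendsto_nhds_weakTop_iff.2 fun f hf => ?_
  obtain ⟨c, hc⟩ := hf.exists_abs_pairing_le_mul_blDualNorm
  have hnorm : Tendsto (fun ν => c * blDualNorm (ν - μ)) (@nhds _ (normTop S) μ) (𝓝 0) := by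
    simpa using (tendsto_nhds_normTop_iff.1 tendsto_id).const_mul c
  refine tendsto_iff_dist_tendsto_zero.2 (squeeze_zero (fun _ => dist_nonneg) (fun ν => ?_) hnorm)
  rw [Real.dist_eq, ← hf.pairing_sub]
  exact hc (ν - μ)

end Topologies

section Approximation

variable {S : Type*} [PseudoMetricSpace S] [MeasurableSpace S]

theorem exists_isClosed_thickening_measureReal_lt [BorelSpace S] (m : Measure S)
    [IsFiniteMeasure m] {A : Set S} (hA : MeasurableSet A) {ε : ℝ} (hε : 0 < ε) :
    ∃ K ⊆ A, IsClosed K ∧ ∃ r > 0, m.real ((A ∪ Metric.thickening r K) \ K) < ε := by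
  obtain ⟨K, hKA, hK, hKm⟩ := hA.exists_isClosed_sdiff_lt (measure_ne_top m A)
    (ENNReal.ofReal_pos.2 (half_pos hε)).ne'
  have hlim : Tendsto (fun r => m.real (Metric.thickening r K)) (𝓝[>] 0) (𝓝 (m.real K)) :=
    (ENNReal.tendsto_toReal (measure_ne_top m K)).comp
      (tendsto_measure_thickening_of_isClosed ⟨1, one_pos, measure_ne_top m _⟩ hK)
  obtain ⟨r, hrm, hr⟩ := ((hlim.eventually_lt_const (lt_add_of_pos_right _ (half_pos hε))).and
    self_mem_nhdsWithin).exists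
  refine ⟨K, hKA, hK, r, hr, ?_⟩
  have hthick : m.real (Metric.thickening r K \ K) < ε / 2 := by
    rw [measureReal_sdiff (Metric.self_subset_thickening hr K) hK.measurableSet]
    linarith
  calc m.real ((A ∪ Metric.thickening r K) \ K)
      ≤ m.real (A \ K) + m.real (Metric.thickening r K \ K) := by
        rw [Set.union_sdiff_distrib]
        exact measureReal_union_le _ _
    _ < ε / 2 + ε / 2 :=
        add_lt_add ((ENNReal.lt_ofReal_iff_toReal_lt (measure_ne_top m _)).1 hKm) hthick
    _ = ε := add_halves ε

theorem exists_isBL_integral_abs_sub_indicator_lt [BorelSpace S] (m : Measure S)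
    [IsFiniteMeasure m] {A : Set S} (hA : MeasurableSet A) {ε : ℝ} (hε : 0 < ε) :
    ∃ h : S → ℝ, IsBL h ∧ (∀ x, h x ∈ Set.Icc 0 1) ∧ ∫ x, |h x - A.indicator 1 x| ∂m < ε := by
  obtain ⟨K, hKA, hK, r, hr, hlt⟩ := exists_isClosed_thickening_measureReal_lt m hA hε
  have hh := isBL_thickenedIndicator hr K
  have h01 (x : S) : (thickenedIndicator hr K x : ℝ) ∈ Set.Icc 0 1 :=
    ⟨NNReal.coe_nonneg _, (le_abs_self _).trans (abs_thickenedIndicator_le_one hr K x)⟩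
  have hA01 (x : S) : A.indicator (1 : S → ℝ) x ∈ Set.Icc 0 1 := by
    by_cases hx : x ∈ A <;> simp [hx]
  have hD : MeasurableSet ((A ∪ Metric.thickening r K) \ K) :=
    (hA.union Metric.isOpen_thickening.measurableSet).diff hK.measurableSet
  have hle := integral_abs_le_of_abs_le_of_abs_le_compl (a := 1) (b := 0)
    ((hh.integrable m).sub ((integrable_const 1).indicator hA)) hD
    (fun x _ => (abs_sub_le_of_le_of_le (h01 x).1 (h01 x).2 (hA01 x).1 (hA01 x).2).trans_eq
      (sub_zero 1))
    (fun x hx => ?_)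
  · refine ⟨_, hh, h01, hle.trans_lt ?_⟩
    rwa [one_mul, zero_mul, add_zero]
  · by_cases hxK : x ∈ K
    · simp [-thickenedIndicator_apply, thickenedIndicator_one hr K hxK, hKA hxK]
    · obtain ⟨hxA, hxr⟩ : x ∉ A ∧ x ∉ Metric.thickening r K :=
        not_or.1 fun hx' => hx ⟨hx', hxK⟩
      simp [-thickenedIndicator_apply, thickenedIndicator_zero hr K hxr, hxA]

theorem exists_isBL_lt_pairing [BorelSpace S] (μ : SignedMeasure S) {c : ℝ} (hc : c < tvNorm μ) :
    ∃ f : S → ℝ, IsBL f ∧ (∀ x, |f x| ≤ 1) ∧ c < pairing μ f := by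
  obtain ⟨P, hP, hPμ⟩ := exists_measurableSet_pairing_eq_tvNorm μ
  obtain ⟨h, hh, h01, hlt⟩ := exists_isBL_integral_abs_sub_indicator_lt μ.totalVariation hP
    (half_pos (sub_pos.2 hc))
  have hf : IsBL fun x => 2 * h x - 1 := ((isBL_const 2).mul hh).sub (isBL_const 1)
  have hP_int : Integrable (P.indicator (1 : S → ℝ)) μ.totalVariation :=
    (integrable_const 1).indicator hP
  refine ⟨_, hf, fun x => abs_le.2 ⟨by linarith [(h01 x).1], by linarith [(h01 x).2]⟩, ?_⟩
  have hdiff : pairing μ (fun x => 2 * h x - 1) - tvNorm μ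
      = 2 * pairing μ (fun x => h x - P.indicator 1 x) := by
    have hsign_int : Integrable (fun x => 2 * P.indicator (1 : S → ℝ) x - 1) μ.totalVariation :=
      (hP_int.const_mul 2).sub (integrable_const 1)
    rw [← hPμ, ← pairing_sub_right (hf.integrable _) hsign_int, ← pairing_const_mul]
    congr 1 with x
    ring
  have habs : |pairing μ (fun x => h x - P.indicator 1 x)| < (tvNorm μ - c) / 2 :=
    (abs_pairing_le_integral_abs ((hh.integrable _).sub hP_int)).trans_lt hlt
  linarith [(abs_lt.1 habs).1]

theorem exists_finite_measureReal_compl_thickening_lt [TopologicalSpace.SeparableSpace S]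
    [OpensMeasurableSpace S] (m : Measure S) [IsFiniteMeasure m] {δ : ℝ} (hδ : 0 < δ) {ε : ℝ}
    (hε : 0 < ε) : ∃ F : Set S, F.Finite ∧ m.real (Metric.thickening δ F)ᶜ < ε := by
  obtain ⟨D, hD, hdense⟩ := TopologicalSpace.exists_countable_dense S
  have : Countable D := hD
  let V (F : Finset D) : Set S := (Metric.thickening δ ((↑) '' (F : Set D)))ᶜ
  have hV : Antitone V := fun F G hFG => Set.compl_subset_compl.2 <|
    Metric.thickening_subset_of_subset δ (Set.image_mono (Finset.coe_subset.2 hFG))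
  have hempty : ⋂ F, V F = ∅ := by
    refine Set.eq_empty_of_forall_notMem fun x hx => ?_
    obtain ⟨y, hyD, hxy⟩ := hdense.exists_dist_lt x hδ
    exact Set.mem_iInter.1 hx {⟨y, hyD⟩} (Metric.mem_thickening_iff.2 ⟨y, by simp, hxy⟩)
  have hlim : Tendsto (m ∘ V) atTop (𝓝 0) := by
    rw [← measure_empty (μ := m), ← hempty]
    exact tendsto_measure_iInter_atTop (s := V)
      (fun F => Metric.isOpen_thickening.measurableSet.compl.nullMeasurableSet) hV
      ⟨∅, measure_ne_top m _⟩
  obtain ⟨F, hF⟩ := (hlim.eventually_lt_const (ENNReal.ofReal_pos.2 hε)).exists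
  exact ⟨_, F.finite_toSet.image _, (ENNReal.lt_ofReal_iff_toReal_lt (measure_ne_top m _)).1 hF⟩

theorem exists_isBL_thickening_lt_pairing [TopologicalSpace.SeparableSpace S] [BorelSpace S]
    (μ : SignedMeasure S) {δ : ℝ} (hδ : 0 < δ) {c : ℝ} (hc : c < tvNorm μ) :
    ∃ (F : Set S) (f : S → ℝ), F.Finite ∧ IsBL f ∧ (∀ x, |f x| ≤ 1) ∧
      (∀ x ∉ Metric.thickening δ F, f x = 0) ∧ c < pairing μ f := by
  obtain ⟨f, hf, hf1, hcf⟩ := exists_isBL_lt_pairing μ hc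
  obtain ⟨F, hF, hFμ⟩ := exists_finite_measureReal_compl_thickening_lt μ.totalVariation
    (half_pos hδ) (sub_pos.2 hcf)
  set V := Metric.thickening (δ / 2) F
  let φ : S → ℝ := fun x => thickenedIndicator (half_pos hδ) V x
  have hφ1 : ∀ x, |φ x| ≤ 1 := abs_thickenedIndicator_le_one (half_pos hδ) V
  have hφV (x : S) (hx : x ∈ V) : φ x = 1 :=
    congrArg NNReal.toReal (thickenedIndicator_one (half_pos hδ) V hx)
  have hfφ : IsBL fun x => f x * φ x := hf.mul (isBL_thickenedIndicator (half_pos hδ) V)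
  have hloss : pairing μ f - pairing μ (fun x => f x * φ x) ≤ μ.totalVariation.real Vᶜ := by
    have hle := integral_abs_le_of_abs_le_of_abs_le_compl (U := V) (a := 0) (b := 1)
      ((hf.sub hfφ).integrable μ.totalVariation) Metric.isOpen_thickening.measurableSet
      (fun x hx => by simp [hφV x hx])
      (fun x _ => ?_)
    · rw [← pairing_sub_right (hf.integrable _) (hfφ.integrable _)]
      refine (le_abs_self _).trans <|
        (abs_pairing_le_integral_abs ((hf.sub hfφ).integrable _)).trans (hle.trans_eq ?_)
      rw [zero_mul, one_mul, zero_add]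
    · have hφ01 : |1 - φ x| ≤ 1 :=
        abs_le.2 ⟨by linarith [le_abs_self (φ x), hφ1 x], by
          linarith [NNReal.coe_nonneg (thickenedIndicator (half_pos hδ) V x)]⟩
      rw [← mul_one_sub, abs_mul]
      exact mul_le_one₀ (hf1 x) (abs_nonneg _) hφ01
  refine ⟨F, _, hF, hfφ, fun x => ?_, fun x hx => ?_, by linarith⟩
  · rw [abs_mul]
    exact mul_le_one₀ (hf1 x) (abs_nonneg _) (hφ1 x)
  · have hxV : x ∉ Metric.thickening (δ / 2) V := fun h =>
      hx (add_halves δ ▸ Metric.thickening_thickening_subset _ _ F h)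
    simp [-thickenedIndicator_apply, φ, thickenedIndicator_zero (half_pos hδ) V hxV]

end Approximation

section Convergence

variable {S : Type*} [PseudoMetricSpace S] [MeasurableSpace S]

theorem abs_pairing_sub_pairing_le [OpensMeasurableSpace S] (μ : SignedMeasure S) {f g h : S → ℝ}
    (hf : IsBL f) (hf1 : ∀ x, |f x| ≤ 1) {U : Set S} (hU : MeasurableSet U)
    (hfU : ∀ x ∉ U, f x = 0) (hg : g ∈ blUnitBall S) (hh : h ∈ blUnitBall S) {η : ℝ} (hη : 0 ≤ η)
    (hgh : ∀ x ∈ U, |g x - h x| ≤ η) :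
    |pairing μ g - pairing μ h| ≤ η * tvNorm μ + 2 * (tvNorm μ - pairing μ f) := by
  have hg_int := (isBL_of_mem_blUnitBall hg).integrable μ.totalVariation
  have hh_int := (isBL_of_mem_blUnitBall hh).integrable μ.totalVariation
  have hgh2 (x : S) : |g x - h x| ≤ 2 := (abs_sub _ _).trans <| by
    linarith [abs_le_one_of_mem_blUnitBall hg x, abs_le_one_of_mem_blUnitBall hh x]
  have hU_le : μ.totalVariation.real U ≤ tvNorm μ := measureReal_mono (Set.subset_univ U)
  calc |pairing μ g - pairing μ h| ≤ ∫ x, |g x - h x| ∂μ.totalVariation := by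
        rw [← pairing_sub_right hg_int hh_int]
        exact abs_pairing_le_integral_abs (hg_int.sub hh_int)
    _ ≤ η * μ.totalVariation.real U + 2 * μ.totalVariation.real Uᶜ :=
        integral_abs_le_of_abs_le_of_abs_le_compl (hg_int.sub hh_int) hU hgh fun x _ => hgh2 x
    _ ≤ η * tvNorm μ + 2 * (tvNorm μ - pairing μ f) := by
        gcongr
        exact totalVariation_compl_le_tvNorm_sub_pairing (hf.integrable _) hf1 hU hfU

variable [TopologicalSpace.SeparableSpace S] [BorelSpace S]

theorem exists_finite_isBL_blDualNorm_sub_le (μ : SignedMeasure S) {δ : ℝ} (hδ : 0 < δ) :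
    ∃ T : Set (S → ℝ), T.Finite ∧ (∀ f ∈ T, IsBL f) ∧ ∀ ν : SignedMeasure S,
      tvNorm ν < tvNorm μ + δ → (∀ f ∈ T, |pairing ν f - pairing μ f| < δ) →
        blDualNorm (ν - μ) ≤ (6 * (tvNorm μ + δ) + 9) * δ := by
  obtain ⟨F, f, hF, hf, hf1, hfU, hμf⟩ :=
    exists_isBL_thickening_lt_pairing μ hδ (sub_lt_self (tvNorm μ) hδ)
  obtain ⟨T, hT, hTfin, hnet⟩ := exists_finite_net_blUnitBall_thickening hF hδ
  refine ⟨insert f T, hTfin.insert f,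
    Set.forall_mem_insert.2 ⟨hf, fun h hh => isBL_of_mem_blUnitBall (hT hh)⟩, fun ν hν hνT => ?_⟩
  obtain ⟨hνf, hνT⟩ := Set.forall_mem_insert.1 hνT
  refine blDualNorm_le fun g hg => ?_
  obtain ⟨h, hhT, hgh⟩ := hnet g hg
  have hreplace (ξ : SignedMeasure S) := abs_pairing_sub_pairing_le ξ hf hf1
    Metric.isOpen_thickening.measurableSet hfU hg (hT hhT) (by positivity) hgh
  have hνδ : 3 * δ * tvNorm ν ≤ 3 * δ * (tvNorm μ + δ) := by gcongr
  have hμδ : 3 * δ * tvNorm μ ≤ 3 * δ * (tvNorm μ + δ) := by gcongr; linarith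
  rw [(isBL_of_mem_blUnitBall hg).pairing_sub]
  calc |pairing ν g - pairing μ g|
      ≤ |pairing ν g - pairing ν h| + |pairing ν h - pairing μ h| + |pairing μ h - pairing μ g| :=
        dist_triangle4 (pairing ν g) (pairing ν h) (pairing μ h) (pairing μ g)
    _ ≤ (3 * δ * (tvNorm μ + δ) + 2 * (3 * δ)) + δ + (3 * δ * (tvNorm μ + δ) + 2 * δ) := by
        rw [abs_sub_comm (pairing μ h)]
        linarith [hreplace ν, hreplace μ, hνT h hhT, (abs_lt.1 hνf).1]
    _ = (6 * (tvNorm μ + δ) + 9) * δ := by ring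

theorem tendsto_blDualNorm_sub_of_tendsto_pairing {ι : Type*} {l : Filter ι}
    {ν : ι → SignedMeasure S} {μ : SignedMeasure S}
    (hpair : ∀ f, IsBL f → Tendsto (fun i => pairing (ν i) f) l (𝓝 (pairing μ f)))
    (htv : ∀ c > tvNorm μ, ∀ᶠ i in l, tvNorm (ν i) < c) :
    Tendsto (fun i => blDualNorm (ν i - μ)) l (𝓝 0) := by
  refine tendsto_order.2
    ⟨fun a ha => .of_forall fun i => ha.trans_le (blDualNorm_nonneg _), fun ε hε => ?_⟩
  have hbound : Tendsto (fun δ => (6 * (tvNorm μ + δ) + 9) * δ) (𝓝[>] 0) (𝓝 0) := by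
    have hcont : Continuous fun δ => (6 * (tvNorm μ + δ) + 9) * δ := by fun_prop
    simpa using (hcont.tendsto 0).mono_left nhdsWithin_le_nhds
  obtain ⟨δ, hδε, hδ⟩ := ((hbound.eventually_lt_const hε).and self_mem_nhdsWithin).exists
  obtain ⟨T, hTfin, hT, hTν⟩ := exists_finite_isBL_blDualNorm_sub_le μ hδ
  have hclose : ∀ᶠ i in l, ∀ f ∈ T, |pairing (ν i) f - pairing μ f| < δ :=
    (eventually_all_finite hTfin).2 fun f hf => Metric.tendsto_nhds.1 (hpair f (hT f hf)) δ hδ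
  filter_upwards [htv _ (lt_add_of_pos_right _ hδ), hclose] with i hi hiT
  exact (hTν (ν i) hi hiT).trans_lt hδε

theorem coincidence_of_topologies_on_tv_sphere_general {M : Set (SignedMeasure S)}
    (hM : @UpperSemicontinuousOn _ ℝ (weakTop S) _ tvNorm M) :
    TopologicalSpace.induced ((↑) : M → SignedMeasure S) (weakTop S) =
      TopologicalSpace.induced ((↑) : M → SignedMeasure S) (normTop S) := by
  refine le_antisymm ((le_iff_nhds _ _).2 fun μ => ?_)
    (induced_mono normTop_le_weakTop)
  simp only [nhds_induced]
  have hcoe : Tendsto ((↑) : M → SignedMeasure S)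
      (comap (↑) (@nhds _ (weakTop S) μ)) (@nhds _ (weakTop S) μ) := tendsto_comap
  refine tendsto_iff_comap.1 <| tendsto_nhds_normTop_iff.2 <|
    tendsto_blDualNorm_sub_of_tendsto_pairing (tendsto_nhds_weakTop_iff.1 hcoe) fun c hc => ?_
  have hwithin : ∀ᶠ ν in @nhds _ (weakTop S) (μ : SignedMeasure S), ν ∈ M → tvNorm ν < c :=
    eventually_inf_principal.1 (hM μ μ.2 c hc)
  exact (hcoe.eventually hwithin).mono fun ν hν => hν ν.2

end Convergence

/-- On a total variation sphere `M = {μ : ‖μ‖_TV = ρ}` (`ρ > 0`) in the space of finite signed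
Borel measures on a complete separable metric space, the relative `σ(M(S), BL(S))`-weak topology
coincides with the relative `‖·‖*_BL`-norm topology. -/
theorem coincidence_of_topologies_on_tv_sphere {S : Type*} [MetricSpace S] [CompleteSpace S]
    [TopologicalSpace.SeparableSpace S] [MeasurableSpace S] [BorelSpace S]
    (ρ : ℝ) (hρ : 0 < ρ) (M : Set (SignedMeasure S))
    (hM : M = {μ : SignedMeasure S | tvNorm μ = ρ}) :
    TopologicalSpace.induced ((↑) : M → SignedMeasure S) (weakTop S) =
      TopologicalSpace.induced ((↑) : M → SignedMeasure S) (normTop S) := by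
  subst hM
  exact coincidence_of_topologies_on_tv_sphere_general fun μ hμ c hc =>
    @eventually_nhdsWithin_of_forall _ (weakTop S) _ _ _ fun ν hν =>
      hν.trans_lt (hμ.symm.trans_lt hc)
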